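/- For any t ∈ ½ℤ, the identity Σ_{(i,m)∈J^f_{-t}} r_m^i ⊗ r_i^{m+1} = −Σ_{(j,n)∈J^f_{t-1/2}} r_j^{n+1} ⊗ r_n^j holds in g ⊗ g. -/

import Mathlib

open Finsupp TensorProduct
open scoped Classical

noncomputable section

/-- sign $(-1)^{p(a)p(b)}$ expressed through the parity signs ζa, ζb ∈ {±1}. -/
def sgn2 (za zb : ℂ) : ℂ := (1 + za + zb - za * zb) / 2

/-- `homIn ev odd a ζ` : `a` is homogeneous of parity sign `ζ`. -/
def homIn {P : Type*} [AddCommGroup P] [Module ℂ P]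
    (ev odd : Submodule ℂ P) (a : P) (z : ℂ) : Prop :=
  (z = 1 ∧ a ∈ ev) ∨ (z = -1 ∧ a ∈ odd)

/-- A finite simple Lie superalgebra over ℂ with a subalgebra span{E,e,H,f,F} ≅ osp(1|2),
a compatible even nondegenerate supersymmetric invariant bilinear form, the ad(H/2)-eigenspace
½ℤ-grading, and dual bases of g^f = ker(ad f) and g^e = ker(ad e). -/
structure SS where
  g : Type
  [iag : AddCommGroup g]
  [img : Module ℂ g]
  [ifd : FiniteDimensional ℂ g]
  gev : Submodule ℂ g
  godd : Submodule ℂ g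
  gparity : IsCompl gev godd
  br : g →ₗ[ℂ] g →ₗ[ℂ] g
  br_parity : ∀ a b za zb, homIn gev godd a za → homIn gev godd b zb →
    homIn gev godd (br a b) (za * zb)
  br_skew : ∀ a b za zb, homIn gev godd a za → homIn gev godd b zb →
    br a b = -(sgn2 za zb) • br b a
  br_jacobi : ∀ a b c za zb, homIn gev godd a za → homIn gev godd b zb →
    br a (br b c) = br (br a b) c + sgn2 za zb • br b (br a c)
  simple : ∀ I : Submodule ℂ g, (∀ a, ∀ x ∈ I, br a x ∈ I) → I = ⊥ ∨ I = ⊤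
  nontriv : ∃ x : g, x ≠ 0
  B : g →ₗ[ℂ] g →ₗ[ℂ] ℂ
  B_supersym : ∀ a b za zb, homIn gev godd a za → homIn gev godd b zb →
    B a b = sgn2 za zb * B b a
  B_even : ∀ a ∈ gev, ∀ b ∈ godd, B a b = 0
  B_invariant : ∀ a b c, B (br a b) c = B a (br b c)
  B_nondeg : ∀ a, (∀ b, B a b = 0) → a = 0
  /-- the osp(1|2)-subalgebra: E, e, H, f, F -/
  Ee : g
  ee : g
  He : g
  fe : g
  Fe : g
  E_even : Ee ∈ gev
  H_even : He ∈ gev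
  F_even : Fe ∈ gev
  e_odd : ee ∈ godd
  f_odd : fe ∈ godd
  tripleHE : br He Ee = (2 : ℂ) • Ee
  tripleHF : br He Fe = (-2 : ℂ) • Fe
  tripleEF : br Ee Fe = He
  ospHe : br He ee = ee
  ospHf : br He fe = -fe
  ospee : br ee ee = (2 : ℂ) • Ee
  ospff : br fe fe = (-2 : ℂ) • Fe
  ospef : br ee fe = -He
  ospFe : br Fe ee = fe
  ospEf : br Ee fe = ee
  BHH : B He He = 2
  BEF : B Ee Fe = 1
  Bef : B ee fe = -2
  /-- the ad(H/2)-eigenspace decomposition g = ⊕_{i ∈ ½ℤ} g(i) -/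
  gr : ℚ → Submodule ℂ g
  gr_eigen : ∀ i : ℚ, ∀ x ∈ gr i, br He x = ((2 * i : ℚ) : ℂ) • x
  gr_halfint : ∀ i : ℚ, (¬ ∃ m : ℤ, i = (m : ℚ) / 2) → gr i = ⊥
  gr_top : (⨆ i : ℚ, gr i) = ⊤
  /-- index set of the bases of g^f and g^e -/
  Jf : Type
  [iJf : Fintype Jf]
  [idJf : DecidableEq Jf]
  /-- basis r_j of g^f = ker ad f -/
  rlo : Jf → g
  /-- basis r^j of g^e = ker ad e -/
  rhi : Jf → g
  sj : Jf → ℂ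
  /-- α_j, the ad(H/2)-weight of r^j -/
  αw : Jf → ℚ
  /-- 2α_j -/
  deg2 : Jf → ℕ
  deg2_eq : ∀ j, (deg2 j : ℚ) = 2 * αw j
  rlo_parity : ∀ j, homIn gev godd (rlo j) (sj j)
  rhi_parity : ∀ j, homIn gev godd (rhi j) (sj j)
  rlo_ker : ∀ j, br fe (rlo j) = 0
  rhi_ker : ∀ j, br ee (rhi j) = 0
  rlo_wt : ∀ j, rlo j ∈ gr (-(αw j))
  rhi_wt : ∀ j, rhi j ∈ gr (αw j)
  rlo_indep : LinearIndependent ℂ rlo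
  rhi_indep : LinearIndependent ℂ rhi
  rlo_span : ∀ x, br fe x = 0 → x ∈ Submodule.span ℂ (Set.range rlo)
  rhi_span : ∀ x, br ee x = 0 → x ∈ Submodule.span ℂ (Set.range rhi)
  pairrr : ∀ i j, B (rhi i) (rlo j) = if i = j then 1 else 0
  /-- r^i_m = (ad f)^m r^i -/
  rup : Jf → ℕ → g
  rup_def : ∀ j m, rup j m = ((br fe : Module.End ℂ g) ^ m) (rhi j)
  /-- normalizing constants C_{j,n} -/
  Cjn : Jf → ℕ → ℂ
  /-- dual basis r_j^n = C_{j,n} (ad e)^n r_j -/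
  rdn : Jf → ℕ → g
  rdn_def : ∀ j n, n ≤ 2 * deg2 j →
    rdn j n = Cjn j n • ((br ee : Module.End ℂ g) ^ n) (rlo j)
  rdn_zero : ∀ j n, 2 * deg2 j < n → rdn j n = 0
  dualpair : ∀ i m j n, m ≤ 2 * deg2 i → n ≤ 2 * deg2 j →
    B (rup i m) (rdn j n) = if i = j ∧ m = n then 1 else 0

attribute [instance] SS.iag SS.img SS.ifd SS.iJf SS.idJf

/-- The index set J^f_t = {(i,m) : r_i^m ∈ g(t), r^i_m ∈ g(-t)}, as a finset. -/
def SS.JfSet (S : SS) (t : ℚ) : Finset (S.Jf × ℕ) :=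
  ((Finset.univ : Finset S.Jf) ×ˢ
      Finset.range (2 * ((Finset.univ : Finset S.Jf).sup S.deg2) + 1)).filter
    (fun p => p.2 ≤ 2 * S.deg2 p.1 ∧ S.rdn p.1 p.2 ∈ S.gr t ∧ S.rup p.1 p.2 ∈ S.gr (-t))

end

noncomputable section

namespace SS

variable (S : SS)

lemma sgn2_neg_one_right (z : ℂ) : sgn2 z (-1) = z := by
  unfold sgn2; ring

lemma homIn_e : homIn S.gev S.godd S.ee (-1) := Or.inr ⟨rfl, S.e_odd⟩

lemma homIn_f : homIn S.gev S.godd S.fe (-1) := Or.inr ⟨rfl, S.f_odd⟩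

lemma homIn_H : homIn S.gev S.godd S.He 1 := Or.inl ⟨rfl, S.H_even⟩

variable {S}

lemma homIn_smul {x : S.g} {z : ℂ} (c : ℂ) (h : homIn S.gev S.godd x z) :
    homIn S.gev S.godd (c • x) z := by
  rcases h with ⟨rfl, h⟩ | ⟨rfl, h⟩
  · exact Or.inl ⟨rfl, Submodule.smul_mem _ _ h⟩
  · exact Or.inr ⟨rfl, Submodule.smul_mem _ _ h⟩

lemma B_br_odd {o x : S.g} {z : ℂ} (ho : homIn S.gev S.godd o (-1))
    (hx : homIn S.gev S.godd x z) (y : S.g) :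
    S.B x (S.br o y) = -z * S.B (S.br o x) y := by
  rw [← S.B_invariant, S.br_skew x o z (-1) hx ho, sgn2_neg_one_right]
  simp

lemma B_br_H {x : S.g} {z : ℂ} (hx : homIn S.gev S.godd x z) (y : S.g) :
    S.B x (S.br S.He y) = - S.B (S.br S.He x) y := by
  have h1 : sgn2 z 1 = 1 := by unfold sgn2; ring
  rw [← S.B_invariant, S.br_skew x S.He z 1 hx S.homIn_H, h1]
  simp

/-- As the form is even, the supersymmetry sign depends on the parity of one argument only. -/
lemma B_symm_of_homIn {x y : S.g} {z w : ℂ} (hx : homIn S.gev S.godd x z)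
    (hy : homIn S.gev S.godd y w) : S.B x y = z * S.B y x := by
  have h := S.B_supersym x y z w hx hy
  rcases hx with ⟨rfl, hx⟩ | ⟨rfl, hx⟩ <;> rcases hy with ⟨rfl, hy⟩ | ⟨rfl, hy⟩
  · rw [h]; norm_num [sgn2]
  · rw [h]; norm_num [sgn2]
  · rw [h, S.B_even y hy x hx]; simp
  · rw [h]; norm_num [sgn2]

lemma br_e_f (x : S.g) :
    S.br S.ee (S.br S.fe x) = - S.br S.He x - S.br S.fe (S.br S.ee x) := by
  rw [S.br_jacobi S.ee S.fe x (-1) (-1) S.homIn_e S.homIn_f, S.ospef, sgn2_neg_one_right]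
  simp [sub_eq_add_neg]

lemma br_H_f (x : S.g) :
    S.br S.He (S.br S.fe x) = S.br S.fe (S.br S.He x) - S.br S.fe x := by
  rw [S.br_jacobi S.He S.fe x 1 (-1) S.homIn_H S.homIn_f, S.ospHf, sgn2_neg_one_right]
  simp [sub_eq_add_neg, add_comm]

lemma br_H_e (x : S.g) :
    S.br S.He (S.br S.ee x) = S.br S.ee (S.br S.He x) + S.br S.ee x := by
  rw [S.br_jacobi S.He S.ee x 1 (-1) S.homIn_H S.homIn_e, S.ospHe, sgn2_neg_one_right]
  simp [add_comm]

lemma br_H_pow_f {x : S.g} {c : ℂ} (hx : S.br S.He x = c • x) (n : ℕ) :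
    S.br S.He (((S.br S.fe : Module.End ℂ S.g) ^ n) x) =
      (c - n) • ((S.br S.fe : Module.End ℂ S.g) ^ n) x := by
  induction n with
  | zero => simpa using hx
  | succ n ih =>
    rw [pow_succ', Module.End.mul_apply, br_H_f, ih, map_smul]
    push_cast
    module

lemma br_H_pow_e {x : S.g} {c : ℂ} (hx : S.br S.He x = c • x) (n : ℕ) :
    S.br S.He (((S.br S.ee : Module.End ℂ S.g) ^ n) x) =
      (c + n) • ((S.br S.ee : Module.End ℂ S.g) ^ n) x := by
  induction n with
  | zero => simpa using hx
  | succ n ih =>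
    rw [pow_succ', Module.End.mul_apply, br_H_e, ih, map_smul]
    push_cast
    module

lemma homIn_pow_odd {o x : S.g} {z : ℂ} (ho : homIn S.gev S.godd o (-1))
    (hx : homIn S.gev S.godd x z) (n : ℕ) :
    homIn S.gev S.godd (((S.br o : Module.End ℂ S.g) ^ n) x) ((-1) ^ n * z) := by
  induction n with
  | zero => simpa using hx
  | succ n ih =>
    rw [pow_succ', Module.End.mul_apply, pow_succ', mul_assoc]
    exact S.br_parity _ _ _ _ ho ih

lemma gr_le_eigenspace (i : ℚ) :
    S.gr i ≤ Module.End.eigenspace (S.br S.He : Module.End ℂ S.g) ((2 * i : ℚ) : ℂ) :=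
  fun x hx => Module.End.mem_eigenspace_iff.2 (S.gr_eigen i x hx)

lemma mem_gr_iff {i : ℚ} {x : S.g} : x ∈ S.gr i ↔ S.br S.He x = ((2 * i : ℚ) : ℂ) • x := by
  refine ⟨S.gr_eigen i x, fun hx => ?_⟩
  have hinj : Function.Injective (fun j : ℚ => ((2 * j : ℚ) : ℂ)) := by
    intro a b hab
    have : (2 * a : ℚ) = 2 * b := Rat.cast_injective hab
    linarith
  have hind := (Module.End.eigenspaces_iSupIndep (S.br S.He : Module.End ℂ S.g)).comp hinj
  have htop : x ∈ S.gr i ⊔ ⨆ (j) (_ : j ≠ i), S.gr j := by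
    have h : (⊤ : Submodule ℂ S.g) ≤ S.gr i ⊔ ⨆ (j) (_ : j ≠ i), S.gr j := by
      rw [← S.gr_top]
      refine iSup_le fun j => ?_
      by_cases hj : j = i
      · subst hj; exact le_sup_left
      · exact le_sup_of_le_right (le_iSup₂_of_le j hj le_rfl)
    exact h Submodule.mem_top
  obtain ⟨a, ha, b, hb, rfl⟩ := Submodule.mem_sup.1 htop
  have hb1 : b ∈ Module.End.eigenspace (S.br S.He : Module.End ℂ S.g) ((2 * i : ℚ) : ℂ) := by
    have h := Submodule.sub_mem _ (Module.End.mem_eigenspace_iff.2 hx) (gr_le_eigenspace i ha)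
    simpa using h
  have hb2 := iSup₂_mono (fun j (_ : j ≠ i) => gr_le_eigenspace (S := S) j) hb
  have hb0 := Submodule.disjoint_def.1 (hind i) b hb1 hb2
  simpa [hb0] using ha

/-- `ad f` is locally nilpotent. -/
lemma exists_pow_f_eq_zero (x : S.g) : ∃ n, ((S.br S.fe : Module.End ℂ S.g) ^ n) x = 0 := by
  suffices h : (⊤ : Submodule ℂ S.g) ≤
      Module.End.maxGenEigenspace (S.br S.fe : Module.End ℂ S.g) 0 by
    simpa [Module.End.mem_maxGenEigenspace] using h (Submodule.mem_top (x := x))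
  rw [← S.gr_top]
  refine iSup_le fun i y hy => ?_
  rw [Module.End.mem_maxGenEigenspace]
  simp only [zero_smul, sub_zero]
  by_contra! hne
  have hfin := Module.End.finite_hasEigenvalue (S.br S.He : Module.End ℂ S.g)
  have hinj : Function.Injective (fun n : ℕ => ((2 * i : ℚ) : ℂ) - n) := by
    intro a b hab
    simpa using hab
  refine (Set.infinite_range_of_injective hinj).mono ?_ hfin
  rintro _ ⟨n, rfl⟩
  exact Module.End.hasEigenvalue_of_hasEigenvector
    ⟨Module.End.mem_eigenspace_iff.2 (br_H_pow_f (S.gr_eigen i y hy) n), hne n⟩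

lemma rup_zero (i : S.Jf) : S.rup i 0 = S.rhi i := by simp [S.rup_def]

lemma br_f_rup (i : S.Jf) (m : ℕ) : S.br S.fe (S.rup i m) = S.rup i (m + 1) := by
  rw [S.rup_def, S.rup_def, pow_succ', Module.End.mul_apply]

lemma homIn_rup (i : S.Jf) (m : ℕ) :
    homIn S.gev S.godd (S.rup i m) ((-1) ^ m * S.sj i) := by
  rw [S.rup_def]
  exact homIn_pow_odd S.homIn_f (S.rhi_parity i) m

lemma homIn_rdn (i : S.Jf) {m : ℕ} (hm : m ≤ 2 * S.deg2 i) :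
    homIn S.gev S.godd (S.rdn i m) ((-1) ^ m * S.sj i) := by
  rw [S.rdn_def i m hm]
  exact homIn_smul _ (homIn_pow_odd S.homIn_e (S.rlo_parity i) m)

lemma sj_mul_self (i : S.Jf) : S.sj i * S.sj i = 1 := by
  rcases S.rhi_parity i with ⟨h, -⟩ | ⟨h, -⟩ <;> rw [h] <;> norm_num

lemma sj_ne_zero (i : S.Jf) : S.sj i ≠ 0 :=
  left_ne_zero_of_mul_eq_one (sj_mul_self i)

lemma two_mul_αw (i : S.Jf) : ((2 * S.αw i : ℚ) : ℂ) = S.deg2 i := by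
  rw [← S.deg2_eq]; simp

lemma br_H_rup (i : S.Jf) (m : ℕ) :
    S.br S.He (S.rup i m) = ((S.deg2 i : ℂ) - m) • S.rup i m := by
  rw [S.rup_def]
  refine br_H_pow_f ?_ m
  rw [S.gr_eigen _ _ (S.rhi_wt i), two_mul_αw]

lemma br_H_rdn (i : S.Jf) {m : ℕ} (hm : m ≤ 2 * S.deg2 i) :
    S.br S.He (S.rdn i m) = (-(S.deg2 i : ℂ) + m) • S.rdn i m := by
  have h : S.br S.He (S.rlo i) = (-(S.deg2 i : ℂ)) • S.rlo i := by
    rw [S.gr_eigen _ _ (S.rlo_wt i), ← two_mul_αw]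
    push_cast
    ring_nf
  rw [S.rdn_def i m hm, map_smul, br_H_pow_e h, smul_comm]

lemma br_e_rup (i : S.Jf) (k : ℕ) :
    S.br S.ee (S.rup i (2 * k + 1)) = ((k : ℂ) - S.deg2 i) • S.rup i (2 * k) ∧
    S.br S.ee (S.rup i (2 * k + 2)) = ((k : ℂ) + 1) • S.rup i (2 * k + 1) := by
  have step {m : ℕ} {c : ℂ} {y : S.g} (h : S.br S.ee (S.rup i m) = c • y)
      (hy : S.br S.fe y = S.rup i m) :
      S.br S.ee (S.rup i (m + 1)) = (m - S.deg2 i - c : ℂ) • S.rup i m := by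
    rw [← br_f_rup, br_e_f, br_H_rup, h, map_smul, hy]
    module
  induction k with
  | zero =>
    have h1 : S.br S.ee (S.rup i 1) = (((0 : ℕ) : ℂ) - S.deg2 i) • S.rup i 0 := by
      rw [← br_f_rup, br_e_f, br_H_rup, rup_zero, S.rhi_ker]
      simp
    refine ⟨h1, ?_⟩
    rw [step h1 (br_f_rup i 0)]
    push_cast
    ring_nf
  | succ k ih =>
    have h1 := step ih.2 (br_f_rup i (2 * k + 1))
    have h1' : S.br S.ee (S.rup i (2 * (k + 1) + 1)) =
        (((k + 1 : ℕ) : ℂ) - S.deg2 i) • S.rup i (2 * (k + 1)) := by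
      rw [show 2 * (k + 1) + 1 = 2 * k + 1 + 1 + 1 by ring, h1]
      push_cast
      ring_nf
    refine ⟨h1', ?_⟩
    rw [step h1' (br_f_rup i _)]
    push_cast
    ring_nf

lemma exists_br_e_rup_succ (i : S.Jf) (m : ℕ) :
    ∃ c : ℂ, S.br S.ee (S.rup i (m + 1)) = c • S.rup i m := by
  obtain ⟨k, rfl | rfl⟩ := Nat.even_or_odd' m
  · exact ⟨_, (br_e_rup i k).1⟩
  · exact ⟨_, (br_e_rup i k).2⟩

lemma eq_zero_of_br_e_eq_zero {x : S.g} (hx : S.br S.ee x = 0) (h : ∀ j, S.B x (S.rlo j) = 0) :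
    x = 0 := by
  obtain ⟨c, rfl⟩ := (Submodule.mem_span_range_iff_exists_fun ℂ).1 (S.rhi_span x hx)
  refine Finset.sum_eq_zero fun j _ => ?_
  have hj := h j
  simp [S.pairrr] at hj
  simp [hj]

lemma eq_zero_of_br_f_eq_zero {x : S.g} (hx : S.br S.fe x = 0) (h : ∀ j, S.B (S.rhi j) x = 0) :
    x = 0 := by
  obtain ⟨c, rfl⟩ := (Submodule.mem_span_range_iff_exists_fun ℂ).1 (S.rlo_span x hx)
  refine Finset.sum_eq_zero fun j _ => ?_
  have hj := h j
  simp [S.pairrr] at hj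
  simp [hj]

lemma rup_eq_zero (i : S.Jf) {m : ℕ} (hm : 2 * S.deg2 i < m) : S.rup i m = 0 := by
  induction m, hm using Nat.le_induction with
  | base =>
    refine eq_zero_of_br_e_eq_zero ?_ fun j => ?_
    · simpa using (br_e_rup i (S.deg2 i)).1
    · have h := B_br_odd S.homIn_f (homIn_rup i (2 * S.deg2 i)) (S.rlo j)
      rw [S.rlo_ker, br_f_rup, map_zero, eq_comm, mul_eq_zero] at h
      exact h.resolve_left (by simp [sj_ne_zero])
  | succ m _ ih => rw [← br_f_rup, ih, map_zero]

lemma eq_zero_of_forall_B_rup {y : S.g} (hy : ∀ i m, S.B (S.rup i m) y = 0) : y = 0 := by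
  obtain ⟨n, hn⟩ := exists_pow_f_eq_zero y
  induction n generalizing y with
  | zero => simpa using hn
  | succ n ih =>
    have hf : S.br S.fe y = 0 := by
      refine ih (fun i m => ?_) (by rwa [pow_succ, Module.End.mul_apply] at hn)
      rw [B_br_odd S.homIn_f (homIn_rup i m), br_f_rup, hy, mul_zero]
    exact eq_zero_of_br_f_eq_zero hf fun j => by rw [← rup_zero, hy]

lemma B_rup_rdn (i : S.Jf) (m : ℕ) (j : S.Jf) {n : ℕ} (hn : n ≤ 2 * S.deg2 j) :
    S.B (S.rup i m) (S.rdn j n) = if i = j ∧ m = n then 1 else 0 := by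
  by_cases hm : m ≤ 2 * S.deg2 i
  · exact S.dualpair i m j n hm hn
  · rw [rup_eq_zero i (by omega), if_neg, map_zero, LinearMap.zero_apply]
    rintro ⟨rfl, rfl⟩
    exact hm hn

lemma br_f_rdn_succ (k : S.Jf) {l : ℕ} (hl : l + 1 ≤ 2 * S.deg2 k) :
    S.br S.fe (S.rdn k (l + 1)) = (-((-1) ^ l * S.sj k)) • S.rdn k l := by
  rw [← sub_eq_zero]
  refine eq_zero_of_forall_B_rup fun i m => ?_
  rw [map_sub, B_br_odd S.homIn_f (homIn_rup i m), br_f_rup, B_rup_rdn _ _ _ hl, map_smul,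
    B_rup_rdn _ _ _ (by omega)]
  by_cases h : i = k ∧ m = l
  · obtain ⟨rfl, rfl⟩ := h
    simp
  · simp [h]

lemma br_e_rdn_top (k : S.Jf) : S.br S.ee (S.rdn k (2 * S.deg2 k)) = 0 := by
  refine eq_zero_of_forall_B_rup fun i m => ?_
  rw [B_br_odd S.homIn_e (homIn_rup i m)]
  rcases m with _ | m
  · simp [rup_zero, S.rhi_ker]
  by_cases hm : m + 1 ≤ 2 * S.deg2 i
  · obtain ⟨c, hc⟩ := exists_br_e_rup_succ i m
    rw [hc, map_smul, LinearMap.smul_apply, B_rup_rdn _ _ _ le_rfl, if_neg]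
    · simp
    · rintro ⟨rfl, rfl⟩
      omega
  · simp [rup_eq_zero i (not_le.1 hm)]

lemma B_rdn_succ_rdn_top (j k : S.Jf) {n : ℕ} :
    S.B (S.rdn j (n + 1)) (S.rdn k (2 * S.deg2 k)) = 0 := by
  by_cases hn : n + 1 ≤ 2 * S.deg2 j
  · have hpow := homIn_pow_odd S.homIn_e (S.rlo_parity j) n
    have h := B_br_odd S.homIn_e hpow (S.rdn k (2 * S.deg2 k))
    rw [br_e_rdn_top, map_zero, eq_comm, mul_eq_zero] at h
    have h' := h.resolve_left (by simp [sj_ne_zero])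
    rw [S.rdn_def j _ hn, map_smul, LinearMap.smul_apply, pow_succ', Module.End.mul_apply, h',
      smul_zero]
  · simp [S.rdn_zero j _ (not_le.1 hn)]

/-- The matrix of the form on pairs `(r_k^{l+1}, r_j^n)` is skew. -/
lemma B_rdn_succ_rdn (k : S.Jf) {l : ℕ} (hl : l ≤ 2 * S.deg2 k) (j : S.Jf) {n : ℕ}
    (hn : n ≤ 2 * S.deg2 j) :
    S.B (S.rdn k (l + 1)) (S.rdn j n) = - S.B (S.rdn j (n + 1)) (S.rdn k l) := by
  rcases hl.eq_or_lt with rfl | hl'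
  · rw [B_rdn_succ_rdn_top, S.rdn_zero k _ (Nat.lt_succ_self _)]
    simp
  rcases hn.eq_or_lt with rfl | hn'
  · rw [B_rdn_succ_rdn_top, S.rdn_zero j _ (Nat.lt_succ_self _)]
    simp
  have h := B_br_odd S.homIn_f (homIn_rdn j hn') (S.rdn k (l + 1))
  rw [br_f_rdn_succ k hl', br_f_rdn_succ j hn', map_smul, map_smul, LinearMap.smul_apply,
    smul_eq_mul, smul_eq_mul] at h
  rw [B_symm_of_homIn (homIn_rdn k hl') (homIn_rdn j hn)]
  have hj := sj_mul_self j
  have hk := sj_mul_self k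
  have hpn : ((-1 : ℂ) ^ n) * (-1) ^ n = 1 := by rw [← mul_pow]; simp
  have hpl : ((-1 : ℂ) ^ l) * (-1) ^ l = 1 := by rw [← mul_pow]; simp
  rw [Nat.succ_eq_add_one] at h
  rw [pow_succ] at h ⊢
  generalize (-1 : ℂ) ^ n = a at *
  generalize (-1 : ℂ) ^ l = b at *
  generalize S.sj j = u at *
  generalize S.sj k = v at *
  generalize S.B (S.rdn j (n + 1)) (S.rdn k l) = X at *
  generalize S.B (S.rdn j n) (S.rdn k (l + 1)) = Y at *
  have h1 : b * v * X = Y := by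
    linear_combination (-1) * h + Y * (a * a * hj + hpn)
  rw [← h1]
  linear_combination (-X) * (b * b * hk + hpl)

variable (S) in
/-- The index set of the dual bases `r^i_m` and `r_i^m` of the whole algebra. -/
def indexSet : Finset (S.Jf × ℕ) :=
  ((Finset.univ : Finset S.Jf) ×ˢ
      Finset.range (2 * ((Finset.univ : Finset S.Jf).sup S.deg2) + 1)).filter
    (fun p => p.2 ≤ 2 * S.deg2 p.1)

lemma mem_indexSet {p : S.Jf × ℕ} : p ∈ S.indexSet ↔ p.2 ≤ 2 * S.deg2 p.1 := by
  have h : S.deg2 p.1 ≤ (Finset.univ : Finset S.Jf).sup S.deg2 :=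
    Finset.le_sup (Finset.mem_univ _)
  simp only [indexSet, Finset.mem_filter, Finset.mem_product, Finset.mem_univ, Finset.mem_range,
    true_and]
  omega

lemma sum_B_rup_smul_rdn (y : S.g) :
    ∑ q ∈ S.indexSet, S.B (S.rup q.1 q.2) y • S.rdn q.1 q.2 = y := by
  rw [← sub_eq_zero]
  refine eq_zero_of_forall_B_rup fun i m => ?_
  rw [map_sub, map_sum, sub_eq_zero]
  by_cases hm : m ≤ 2 * S.deg2 i
  · rw [Finset.sum_eq_single (i, m)]
    · simp [B_rup_rdn _ _ _ hm]
    · rintro ⟨j, n⟩ hq hne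
      rw [map_smul, B_rup_rdn _ _ _ (mem_indexSet.1 hq), if_neg, smul_zero]
      rintro ⟨rfl, rfl⟩
      exact hne rfl
    · exact fun h => (h (mem_indexSet.2 hm)).elim
  · simp [rup_eq_zero i (not_le.1 hm)]

lemma sum_B_rdn_smul_rup (x : S.g) :
    ∑ q ∈ S.indexSet, S.B x (S.rdn q.1 q.2) • S.rup q.1 q.2 = x := by
  rw [← sub_eq_zero]
  refine S.B_nondeg _ fun y => ?_
  rw [map_sub, LinearMap.sub_apply, sub_eq_zero]
  conv_rhs => rw [← sum_B_rup_smul_rdn y]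
  simp [LinearMap.sum_apply, mul_comm]

lemma mem_JfSet_iff {p : S.Jf × ℕ} {t : ℚ} :
    p ∈ S.JfSet t ↔ p ∈ S.indexSet ∧ 2 * t = -(S.deg2 p.1 : ℚ) + p.2 := by
  have hJ : p ∈ S.JfSet t ↔
      p ∈ S.indexSet ∧ S.rdn p.1 p.2 ∈ S.gr t ∧ S.rup p.1 p.2 ∈ S.gr (-t) := by
    simp only [JfSet, indexSet, Finset.mem_filter, and_assoc]
  rw [hJ]
  refine and_congr_right fun hp => ?_
  rw [mem_indexSet] at hp
  rw [mem_gr_iff, mem_gr_iff, br_H_rdn _ hp, br_H_rup]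
  constructor
  · rintro ⟨h, -⟩
    have hne : S.rdn p.1 p.2 ≠ 0 := by
      intro h0
      have := B_rup_rdn p.1 p.2 p.1 hp
      simp [h0] at this
    have := smul_left_injective ℂ hne h
    exact_mod_cast this.symm
  · intro h
    rw [show 2 * -t = -(2 * t) by ring, h]
    push_cast
    exact ⟨rfl, by ring_nf⟩

lemma weight_of_B_rdn_succ_ne_zero {p q : S.Jf × ℕ} (hq : q ∈ S.indexSet)
    (h : S.B (S.rdn p.1 (p.2 + 1)) (S.rdn q.1 q.2) ≠ 0) :
    (-(S.deg2 p.1 : ℚ) + p.2) + (-(S.deg2 q.1 : ℚ) + q.2) = -1 := by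
  have hp : p.2 + 1 ≤ 2 * S.deg2 p.1 := by
    by_contra hp
    simp [S.rdn_zero p.1 _ (not_le.1 hp)] at h
  have hB := B_br_H (homIn_rdn p.1 hp) (S.rdn q.1 q.2)
  rw [br_H_rdn _ hp, br_H_rdn _ (mem_indexSet.1 hq), map_smul, map_smul, LinearMap.smul_apply,
    smul_eq_mul, smul_eq_mul, ← neg_mul] at hB
  have := mul_right_cancel₀ h hB
  have h2 : (-(S.deg2 p.1 : ℂ) + p.2) + (-(S.deg2 q.1 : ℂ) + q.2) = -1 := by
    push_cast at this
    linear_combination this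
  exact_mod_cast h2

end SS

/-- **Lemma 6.5**: for any t ∈ ½ℤ,
Σ_{(i,m)∈J^f_{-t}} r_m^i ⊗ r_i^{m+1} = −Σ_{(j,n)∈J^f_{t-1/2}} r_j^{n+1} ⊗ r_n^j in g ⊗ g. -/
theorem statement17 (S : SS) (t : ℚ) (ht : ∃ m : ℤ, t = (m : ℚ) / 2) :
    ∑ p ∈ S.JfSet (-t), S.rup p.1 p.2 ⊗ₜ[ℂ] S.rdn p.1 (p.2 + 1)
      = - ∑ p ∈ S.JfSet (t - 1/2), S.rdn p.1 (p.2 + 1) ⊗ₜ[ℂ] S.rup p.1 p.2 := by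
  have hJ (s : ℚ) : S.JfSet s =
      S.indexSet.filter fun p => 2 * s = -(S.deg2 p.1 : ℚ) + p.2 := by
    ext p
    rw [SS.mem_JfSet_iff, Finset.mem_filter]
  have hL (p : S.Jf × ℕ) : S.rup p.1 p.2 ⊗ₜ[ℂ] S.rdn p.1 (p.2 + 1) =
      ∑ q ∈ S.indexSet, S.B (S.rdn p.1 (p.2 + 1)) (S.rdn q.1 q.2) •
        S.rup p.1 p.2 ⊗ₜ[ℂ] S.rup q.1 q.2 := by
    conv_lhs => rw [← SS.sum_B_rdn_smul_rup (S.rdn p.1 (p.2 + 1)), TensorProduct.tmul_sum]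
    simp only [TensorProduct.tmul_smul]
  have hR (p : S.Jf × ℕ) : S.rdn p.1 (p.2 + 1) ⊗ₜ[ℂ] S.rup p.1 p.2 =
      ∑ q ∈ S.indexSet, S.B (S.rdn p.1 (p.2 + 1)) (S.rdn q.1 q.2) •
        S.rup q.1 q.2 ⊗ₜ[ℂ] S.rup p.1 p.2 := by
    conv_lhs => rw [← SS.sum_B_rdn_smul_rup (S.rdn p.1 (p.2 + 1)), TensorProduct.sum_tmul]
    simp only [TensorProduct.smul_tmul']
  simp only [hJ, hL, hR]
  rw [Finset.sum_comm, Finset.sum_filter, ← Finset.sum_neg_distrib]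
  refine Finset.sum_congr rfl fun q hq => ?_
  have hskew (p : S.Jf × ℕ) (hp : p ∈ S.indexSet) :
      S.B (S.rdn p.1 (p.2 + 1)) (S.rdn q.1 q.2) = -S.B (S.rdn q.1 (q.2 + 1)) (S.rdn p.1 p.2) :=
    SS.B_rdn_succ_rdn _ (SS.mem_indexSet.1 hp) _ (SS.mem_indexSet.1 hq)
  rw [Finset.sum_filter]
  split_ifs with hQ
  · rw [← Finset.sum_neg_distrib]
    refine Finset.sum_congr rfl fun p hp => ?_
    rw [hskew p hp, neg_smul]
    split_ifs with hP
    · rfl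
    · by_cases h0 : S.B (S.rdn q.1 (q.2 + 1)) (S.rdn p.1 p.2) = 0
      · rw [h0, zero_smul, neg_zero]
      · have := SS.weight_of_B_rdn_succ_ne_zero hp h0
        exact absurd (by linarith) hP
  · rw [neg_zero]
    refine Finset.sum_eq_zero fun p hp => ?_
    split_ifs with hP
    · by_cases h0 : S.B (S.rdn p.1 (p.2 + 1)) (S.rdn q.1 q.2) = 0
      · rw [h0, zero_smul]
      · have := SS.weight_of_B_rdn_succ_ne_zero hq h0
        exact absurd (by linarith) hQ
    · rfl

end
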